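/- Let G = (V, E) be a finite simple graph with vertex set V = {1, …, n}, n ≥ 2, and adopt the chart setup: chart configurations P = (P_1, …, P_n) have every (3,4) entry of P_i equal to 1, and U is the set of chart configurations with every P_i of rank 3 and, for every edge {i,j}, nonzero (3,3) entry of 𝓕(P_i,P_j). For P ∈ U and e = {i,j} ∈ E set F̂_e = 𝓕(P_i,P_j) / [𝓕(P_i,P_j)]_{3,3}, and define the linear map D_P sending a tuple H = (H_1, …, H_n) of complex 3×4 matrices with vanishing (3,4) entries to the edge-indexed tuple (H_jᵀ F̂_e P_i + P_jᵀ F̂_e H_i + H_iᵀ F̂_eᵀ P_j + P_iᵀ F̂_eᵀ H_j)_{e={i,j}∈E} (this is the Jacobian of the system Φ_G^aff with respect to the camera variables at (P, F̂)). Then for a generic P ∈ U, the rank of D_P equals the rank of the derivative at P of the affine fundamental-matrix map 𝓕_G^aff given by (𝓕_G^aff(P))_e = 𝓕(P_i,P_j) / [𝓕(P_i,P_j)]_{3,3}. -/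

import Mathlib

open Matrix

attribute [local instance] Matrix.normedAddCommGroup Matrix.normedSpace

/-- The fundamental matrix of a camera pair `(P, Q)` of `3 × 4` matrices:
its `(h,k)` entry is `(-1)^(h+k)` times the determinant of the `4 × 4` matrix
obtained by stacking the rows of `P` other than row `k` (in their original order)
on top of the rows of `Q` other than row `h` (in their original order). -/
def fund {K : Type*} [CommRing K] (P Q : Matrix (Fin 3) (Fin 4) K) :
    Matrix (Fin 3) (Fin 3) K :=
  Matrix.of fun h k =>
    (-1 : K) ^ ((h : ℕ) + (k : ℕ)) *
      (Matrix.of fun r c : Fin 4 =>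
          if hr : (r : ℕ) < 2 then P (k.succAbove ⟨(r : ℕ), hr⟩) c
          else Q (h.succAbove ⟨(r : ℕ) - 2, by have := r.isLt; omega⟩) c).det

/-- A configuration on a graph with vertex set `{1, …, n}`: a tuple of `n`
complex `3 × 4` matrices. -/
abbrev Config (n : ℕ) := Fin n → Matrix (Fin 3) (Fin 4) ℂ

/-- The edges of a graph on `Fin n`, each represented by its unique ordered pair
`(i, j)` of adjacent vertices with `i < j`. -/
abbrev EdgeIdx {n : ℕ} (G : SimpleGraph (Fin n)) : Type :=
  {p : Fin n × Fin n // G.Adj p.1 p.2 ∧ p.1 < p.2}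

/-- The chart domain `U`: chart configurations (every `(3,4)` entry equal to `1`)
consisting of rank-3 cameras, such that on every edge the `(3,3)` entry of the
fundamental matrix is nonzero. -/
def chartDomain {n : ℕ} (G : SimpleGraph (Fin n)) : Set (Config n) :=
  {P | (∀ i, P i 2 3 = 1) ∧ (∀ i, (P i).rank = 3) ∧
    ∀ i j : Fin n, G.Adj i j → fund (P i) (P j) 2 2 ≠ 0}

/-- The normalized fundamental matrix `F̂_e` on the edge `e = {i,j}`: the
fundamental matrix `𝓕(Pᵢ, Pⱼ)` divided by its `(3,3)` entry. -/
noncomputable def Fhat {n : ℕ} (G : SimpleGraph (Fin n)) (P : Config n)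
    (e : EdgeIdx G) : Matrix (Fin 3) (Fin 3) ℂ :=
  (fund (P e.1.1) (P e.1.2) 2 2)⁻¹ • fund (P e.1.1) (P e.1.2)

/-- The affine fundamental-matrix map `𝓕_G^aff`: on each edge, the fundamental
matrix divided by its `(3,3)` entry. -/
noncomputable def Faff {n : ℕ} (G : SimpleGraph (Fin n)) (P : Config n) :
    EdgeIdx G → Matrix (Fin 3) (Fin 3) ℂ := fun e => Fhat G P e

/-- The tuples of `3 × 4` matrices whose `(3,4)` entries vanish: the directions
tangent to the chart configurations. -/
noncomputable def chartDirections (n : ℕ) : Submodule ℂ (Config n) where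
  carrier := {H | ∀ i, H i 2 3 = 0}
  add_mem' := by
    intro a b ha hb
    intro i
    simp [ha i, hb i]
  zero_mem' := by intro i; simp
  smul_mem' := by
    intro c a ha
    intro i
    simp [ha i]

/-- The Jacobian of the affine polynomial system `Φ_G^aff` with respect to the
camera variables at `(P, F̂)`, on all tuples of `3 × 4` matrices: it sends `H` to
the edge-indexed tuple
`(Hⱼᵀ F̂_e Pᵢ + Pⱼᵀ F̂_e Hᵢ + Hᵢᵀ F̂_eᵀ Pⱼ + Pᵢᵀ F̂_eᵀ Hⱼ)_{e={i,j}∈E}`. -/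
noncomputable def JPhat {n : ℕ} (G : SimpleGraph (Fin n)) (P : Config n) :
    Config n →ₗ[ℂ] (EdgeIdx G → Matrix (Fin 4) (Fin 4) ℂ) where
  toFun H := fun e =>
    (H e.1.2)ᵀ * Fhat G P e * P e.1.1 +
      (P e.1.2)ᵀ * Fhat G P e * H e.1.1 +
      (H e.1.1)ᵀ * (Fhat G P e)ᵀ * P e.1.2 +
      (P e.1.1)ᵀ * (Fhat G P e)ᵀ * H e.1.2
  map_add' H K := by
    funext e
    simp only [Pi.add_apply, Matrix.transpose_add, Matrix.add_mul, Matrix.mul_add]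
    abel
  map_smul' c H := by
    funext e
    simp only [Pi.smul_apply, Matrix.transpose_smul, Matrix.smul_mul,
      Matrix.mul_smul, RingHom.id_apply, smul_add]

/-- `D_P`: the above Jacobian restricted to tuples whose `(3,4)` entries vanish. -/
noncomputable def DP {n : ℕ} (G : SimpleGraph (Fin n)) (P : Config n) :
    chartDirections n →ₗ[ℂ] (EdgeIdx G → Matrix (Fin 4) (Fin 4) ℂ) :=
  (JPhat G P) ∘ₗ (chartDirections n).subtype

/-- The index set of the free entries of a chart configuration: all matrix
entries except the fixed `(3,4)` entry of each camera. -/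
abbrev FreeIdx (n : ℕ) : Type :=
  Fin n × {rc : Fin 3 × Fin 4 // rc ≠ ((2 : Fin 3), (3 : Fin 4))}

/-- The explicit `4 × 4` determinant with rows `p`, `q`, `r`, `s`. -/
def dfour {K : Type*} [CommRing K] (p q r s : Fin 4 → K) : K :=
  (p 0 * q 1 - p 1 * q 0) * (r 2 * s 3 - r 3 * s 2)
  - (p 0 * q 2 - p 2 * q 0) * (r 1 * s 3 - r 3 * s 1)
  + (p 0 * q 3 - p 3 * q 0) * (r 1 * s 2 - r 2 * s 1)
  + (p 1 * q 2 - p 2 * q 1) * (r 0 * s 3 - r 3 * s 0)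
  - (p 1 * q 3 - p 3 * q 1) * (r 0 * s 2 - r 2 * s 0)
  + (p 2 * q 3 - p 3 * q 2) * (r 0 * s 1 - r 1 * s 0)

theorem det_eq_dfour {K : Type*} [CommRing K] (A : Matrix (Fin 4) (Fin 4) K) :
    A.det = dfour (A 0) (A 1) (A 2) (A 3) := by
  rw [Matrix.det_succ_row_zero]
  have t10 : (1 : Fin 4).succAbove (0 : Fin 3) = 0 := rfl
  have t11 : (1 : Fin 4).succAbove (1 : Fin 3) = 2 := rfl
  have t12 : (1 : Fin 4).succAbove (2 : Fin 3) = 3 := rfl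
  have t20 : (2 : Fin 4).succAbove (0 : Fin 3) = 0 := rfl
  have t21 : (2 : Fin 4).succAbove (1 : Fin 3) = 1 := rfl
  have t22 : (2 : Fin 4).succAbove (2 : Fin 3) = 3 := rfl
  have t30 : (3 : Fin 4).succAbove (0 : Fin 3) = 0 := rfl
  have t31 : (3 : Fin 4).succAbove (1 : Fin 3) = 1 := rfl
  have t32 : (3 : Fin 4).succAbove (2 : Fin 3) = 2 := rfl
  have t00 : (0 : Fin 4).succAbove (0 : Fin 3) = 1 := rfl
  have t01 : (0 : Fin 4).succAbove (1 : Fin 3) = 2 := rfl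
  have t02 : (0 : Fin 4).succAbove (2 : Fin 3) = 3 := rfl
  have r0 : Fin.succ (0 : Fin 3) = 1 := rfl
  have r1 : Fin.succ (1 : Fin 3) = 2 := rfl
  have r2 : Fin.succ (2 : Fin 3) = 3 := rfl
  have v0 : ((0 : Fin 4) : ℕ) = 0 := rfl
  have v1 : ((1 : Fin 4) : ℕ) = 1 := rfl
  have v2 : ((2 : Fin 4) : ℕ) = 2 := rfl
  have v3 : ((3 : Fin 4) : ℕ) = 3 := rfl
  simp only [Matrix.det_fin_three, Fin.sum_univ_four, Matrix.submatrix_apply, t00, t01, t02, t10,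
    t11, t12, t20, t21, t22, t30, t31, t32, r0, r1, r2, v0, v1, v2, v3, dfour]
  ring

theorem fund_eq {K : Type*} [CommRing K] (P Q : Matrix (Fin 3) (Fin 4) K) (h k : Fin 3) :
    fund P Q h k = (-1 : K) ^ ((h : ℕ) + (k : ℕ)) *
      dfour (P (k.succAbove 0)) (P (k.succAbove 1)) (Q (h.succAbove 0)) (Q (h.succAbove 1)) := by
  rw [fund, Matrix.of_apply, det_eq_dfour]
  rfl

theorem fund_entry_zero {K : Type*} [CommRing K] (P Q : Matrix (Fin 3) (Fin 4) K) (a b : Fin 4) :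
    ∑ h, ∑ k, (Q h a * fund P Q h k * P k b + Q h b * fund P Q h k * P k a) = 0 := by
  have s00 : (0 : Fin 3).succAbove (0 : Fin 2) = 1 := rfl
  have s01 : (0 : Fin 3).succAbove (1 : Fin 2) = 2 := rfl
  have s10 : (1 : Fin 3).succAbove (0 : Fin 2) = 0 := rfl
  have s11 : (1 : Fin 3).succAbove (1 : Fin 2) = 2 := rfl
  have s20 : (2 : Fin 3).succAbove (0 : Fin 2) = 0 := rfl
  have s21 : (2 : Fin 3).succAbove (1 : Fin 2) = 1 := rfl
  have v0 : ((0 : Fin 3) : ℕ) = 0 := rfl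
  have v1 : ((1 : Fin 3) : ℕ) = 1 := rfl
  have v2 : ((2 : Fin 3) : ℕ) = 2 := rfl
  simp only [fund_eq, Fin.sum_univ_three, s00, s01, s10, s11, s20, s21, v0, v1, v2]
  generalize P 0 = p0, P 1 = p1, P 2 = p2, Q 0 = q0, Q 1 = q1, Q 2 = q2
  simp only [dfour]
  fin_cases a <;> fin_cases b <;>
  · dsimp only [Fin.zero_eta, Fin.mk_one, Fin.reduceFinMk]
    ring

theorem ker_key (x y u v : ℂ) (huv : ¬ (u = 0 ∧ v = 0)) (h1 : x * u = 0)
    (h2 : x * v + y * u = 0) (h3 : y * v = 0) : x = 0 ∧ y = 0 := by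
  by_cases hu : u = 0
  · have hv : v ≠ 0 := fun hv => huv ⟨hu, hv⟩
    simp_all
  · simp_all

theorem ker_alg (P' Q' : Matrix (Fin 3) (Fin 4) ℂ) (M : Matrix (Fin 3) (Fin 3) ℂ) (hM : M 2 2 = 0)
    (p0 : P' 0 = ![1, 0, 0, 0]) (p1 : P' 1 = ![0, 1, 0, 0])
    (q0 : Q' 0 = ![0, 0, 1, 0]) (q1 : Q' 1 = ![0, 0, 0, 1])
    (hb : ¬ (Q' 2 0 = 0 ∧ Q' 2 1 = 0)) (ha : ¬ (P' 2 2 = 0 ∧ P' 2 3 = 0))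
    (e : ∀ a b, (Q'ᵀ * M * P' + P'ᵀ * Mᵀ * Q') a b = 0) : M = 0 := by
  have e00 := e 0 0
  have e01 := e 0 1
  have e11 := e 1 1
  have e22 := e 2 2
  have e23 := e 2 3
  have e33 := e 3 3
  have e02 := e 0 2
  have e03 := e 0 3
  have e12 := e 1 2
  have e13 := e 1 3
  simp only [Matrix.add_apply, Matrix.transpose_apply, Matrix.mul_apply, Fin.sum_univ_three,
    p0, p1, q0, q1, hM] at e00 e01 e11 e22 e23 e33 e02 e03 e12 e13
  clear e
  simp at e00 e01 e11 e22 e23 e33 e02 e03 e12 e13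
  obtain ⟨m20, m21⟩ := ker_key (M 2 0) (M 2 1) (Q' 2 0) (Q' 2 1) hb
    (by linear_combination e00 / 2) (by linear_combination e01) (by linear_combination e11 / 2)
  obtain ⟨m02, m12⟩ := ker_key (M 0 2) (M 1 2) (P' 2 2) (P' 2 3) ha
    (by linear_combination e22 / 2) (by linear_combination e23) (by linear_combination e33 / 2)
  simp only [m20, m21, m02, m12, mul_zero, zero_mul, add_zero] at e02 e03 e12 e13
  ext i j
  fin_cases i <;> fin_cases j <;> assumption

theorem ker_aux (P Q : Matrix (Fin 3) (Fin 4) ℂ) (hP : P.rank = 3) (hQ : Q.rank = 3)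
    (hF : fund P Q 2 2 ≠ 0) (M : Matrix (Fin 3) (Fin 3) ℂ) (hM : M 2 2 = 0)
    (hS : Qᵀ * M * P + Pᵀ * Mᵀ * Q = 0) : M = 0 := by
  obtain ⟨B, hB, hdet⟩ : ∃ B : Matrix (Fin 4) (Fin 4) ℂ,
      B = Matrix.of ![P 0, P 1, Q 0, Q 1] ∧ IsUnit B.det := by
    refine ⟨_, rfl, ?_⟩
    rw [isUnit_iff_ne_zero]
    rw [fund_eq] at hF
    rw [det_eq_dfour]
    exact right_ne_zero_of_mul hF
  obtain ⟨C, hC⟩ : ∃ C, B * C = 1 := ⟨B⁻¹, Matrix.mul_nonsing_inv B hdet⟩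
  have hC' : C * B = 1 := mul_eq_one_comm.mp hC
  have hr : ∀ r c, ∑ x, B r x * C x c = if r = c then 1 else 0 := fun r c => by
    rw [← Matrix.mul_apply, hC, Matrix.one_apply]
  have inj : ∀ R : Matrix (Fin 3) (Fin 4) ℂ, R.rank = 3 → ∀ v : Fin 3 → ℂ,
      v ᵥ* (R * C) = 0 → v = 0 := by
    intro R hR v hv
    have h1 : v ᵥ* R = 0 := by
      have := congrArg (· ᵥ* B) hv
      simpa [Matrix.vecMul_vecMul, Matrix.mul_assoc, hC'] using this
    have hli : LinearIndependent ℂ R.row := by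
      rw [linearIndependent_iff_card_eq_finrank_span, Set.finrank, ← Matrix.rank_eq_finrank_span_row, hR]
      simp
    exact Matrix.vecMul_injective_iff.mpr hli (by simpa using h1)
  obtain ⟨P', hP'⟩ : ∃ P', P' = P * C := ⟨_, rfl⟩
  obtain ⟨Q', hQ'⟩ : ∃ Q', Q' = Q * C := ⟨_, rfl⟩
  have p0 : P' 0 = ![1, 0, 0, 0] := by
    ext c
    rw [hP', Matrix.mul_apply]
    have := hr 0 c
    rw [hB] at this
    refine Eq.trans this ?_
    fin_cases c <;> simp
  have p1 : P' 1 = ![0, 1, 0, 0] := by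
    ext c
    rw [hP', Matrix.mul_apply]
    have := hr 1 c
    rw [hB] at this
    refine Eq.trans this ?_
    fin_cases c <;> simp
  have q0 : Q' 0 = ![0, 0, 1, 0] := by
    ext c
    rw [hQ', Matrix.mul_apply]
    have := hr 2 c
    rw [hB] at this
    refine Eq.trans this ?_
    fin_cases c <;> simp
  have q1 : Q' 1 = ![0, 0, 0, 1] := by
    ext c
    rw [hQ', Matrix.mul_apply]
    have := hr 3 c
    rw [hB] at this
    refine Eq.trans this ?_
    fin_cases c <;> simp
  have hS' : Q'ᵀ * M * P' + P'ᵀ * Mᵀ * Q' = 0 := by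
    have := congrArg (fun X => Cᵀ * X * C) hS
    simpa [hP', hQ', Matrix.mul_add, Matrix.add_mul, Matrix.mul_assoc, Matrix.transpose_mul]
      using this
  have e : ∀ a b, (Q'ᵀ * M * P' + P'ᵀ * Mᵀ * Q') a b = 0 := fun a b => by rw [hS']; rfl
  have hb : ¬ (Q' 2 0 = 0 ∧ Q' 2 1 = 0) := by
    rintro ⟨h0, h1⟩
    have := inj Q hQ ![-Q' 2 2, -Q' 2 3, 1] (by
      rw [← hQ']
      ext c
      fin_cases c <;> simp [Matrix.vecMul, dotProduct, Fin.sum_univ_succ, q0, q1, h0, h1])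
    simpa using congrFun this 2
  have ha : ¬ (P' 2 2 = 0 ∧ P' 2 3 = 0) := by
    rintro ⟨h0, h1⟩
    have := inj P hP ![-P' 2 0, -P' 2 1, 1] (by
      rw [← hP']
      ext c
      fin_cases c <;> simp [Matrix.vecMul, dotProduct, Fin.sum_univ_succ, p0, p1, h0, h1])
    simpa using congrFun this 2
  exact ker_alg P' Q' M hM p0 p1 q0 q1 hb ha e

theorem fund_differentiable (h k : Fin 3) :
    Differentiable ℂ (fun x : Matrix (Fin 3) (Fin 4) ℂ × Matrix (Fin 3) (Fin 4) ℂ =>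
      fund x.1 x.2 h k) := by
  have hp : ∀ i j, Differentiable ℂ
      (fun x : Matrix (Fin 3) (Fin 4) ℂ × Matrix (Fin 3) (Fin 4) ℂ => x.1 i j) := fun i j =>
    differentiable_pi.1 (differentiable_pi.1 differentiable_fst i) j
  have hq : ∀ i j, Differentiable ℂ
      (fun x : Matrix (Fin 3) (Fin 4) ℂ × Matrix (Fin 3) (Fin 4) ℂ => x.2 i j) := fun i j =>
    differentiable_pi.1 (differentiable_pi.1 differentiable_snd i) j
  simp only [fund_eq, dfour]
  fun_prop (disch := assumption)

theorem rank_eq_of_ker_eq {V W₁ W₂ : Type} [AddCommGroup V] [Module ℂ V]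
    [AddCommGroup W₁] [Module ℂ W₁] [AddCommGroup W₂] [Module ℂ W₂]
    (f : V →ₗ[ℂ] W₁) (g : V →ₗ[ℂ] W₂) (h : LinearMap.ker f = LinearMap.ker g) :
    LinearMap.rank f = LinearMap.rank g := by
  unfold LinearMap.rank
  rw [← f.quotKerEquivRange.rank_eq, ← g.quotKerEquivRange.rank_eq, h]

theorem Faff_differentiableAt {n : ℕ} (G : SimpleGraph (Fin n)) [DecidableRel G.Adj] (P : Config n)
    (hP : P ∈ chartDomain G) : DifferentiableAt ℂ (Faff G) P := by
  refine differentiableAt_pi.2 fun e => differentiableAt_pi.2 fun h => differentiableAt_pi.2 fun k => ?_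
  have hd : ∀ h k, DifferentiableAt ℂ (fun P : Config n => fund (P e.1.1) (P e.1.2) h k) P := by
    intro h k
    exact (fund_differentiable h k).differentiableAt.comp P
      (f := fun P : Config n => (P e.1.1, P e.1.2)) (by fun_prop)
  exact ((hd 2 2).inv (hP.2.2 _ _ e.2.1)).mul (hd h k)

theorem Fhat_entry_zero {n : ℕ} (G : SimpleGraph (Fin n)) (P : Config n) (e : EdgeIdx G)
    (a b : Fin 4) :
    ∑ h, ∑ k, (P e.1.2 h a * Fhat G P e h k * P e.1.1 k b
      + P e.1.2 h b * Fhat G P e h k * P e.1.1 k a) = 0 := by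
  have := congrArg ((fund (P e.1.1) (P e.1.2) 2 2)⁻¹ * ·) (fund_entry_zero (P e.1.1) (P e.1.2) a b)
  simp only [Finset.mul_sum, mul_zero] at this
  rw [← this]
  refine Finset.sum_congr rfl fun h _ => Finset.sum_congr rfl fun k _ => ?_
  simp only [Fhat, Matrix.smul_apply, smul_eq_mul]
  ring

theorem deriv_facts {n : ℕ} (G : SimpleGraph (Fin n)) [DecidableRel G.Adj] (P : Config n)
    (hP : P ∈ chartDomain G) (H : Config n) (e : EdgeIdx G) :
    (fderiv ℂ (Faff G) P H e) 2 2 = 0 ∧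
    JPhat G P H e + ((P e.1.2)ᵀ * (fderiv ℂ (Faff G) P H e) * P e.1.1 +
      (P e.1.1)ᵀ * (fderiv ℂ (Faff G) P H e)ᵀ * P e.1.2) = 0 := by
  have hF := (Faff_differentiableAt G P hP).hasFDerivAt
  have hl : HasDerivAt (fun t : ℂ => P + t • H) H 0 := by
    have := ((hasDerivAt_id (0 : ℂ)).smul_const H).const_add P
    rwa [one_smul] at this
  have hg : HasDerivAt (fun t : ℂ => Faff G (P + t • H)) (fderiv ℂ (Faff G) P H) 0 := by
    exact HasFDerivAt.comp_hasDerivAt_of_eq (l := Faff G) (f := fun t : ℂ => P + t • H) 0 hF hl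
      (by rw [zero_smul, add_zero])
  have hge : ∀ h k, HasDerivAt (fun t : ℂ => Fhat G (P + t • H) e h k)
      ((fderiv ℂ (Faff G) P H e) h k) 0 := fun h k =>
    hasDerivAt_pi.1 (hasDerivAt_pi.1 (hasDerivAt_pi.1 hg e) h) k
  have hPe : ∀ i h k, HasDerivAt (fun t : ℂ => (P + t • H) i h k) (H i h k) 0 := fun i h k =>
    hasDerivAt_pi.1 (hasDerivAt_pi.1 (hasDerivAt_pi.1 hl i) h) k
  constructor
  · have hd : DifferentiableAt ℂ (fun P : Config n => fund (P e.1.1) (P e.1.2) 2 2) P := 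
      (fund_differentiable 2 2).differentiableAt.comp P
        (f := fun P : Config n => (P e.1.1, P e.1.2)) (by fun_prop)
    have hc : ContinuousAt (fun t : ℂ => fund ((P + t • H) e.1.1) ((P + t • H) e.1.2) 2 2) 0 := by
      refine ContinuousAt.comp (f := fun t : ℂ => P + t • H)
        (g := fun P : Config n => fund (P e.1.1) (P e.1.2) 2 2) ?_ hl.continuousAt
      simpa using hd.continuousAt
    have hne := hc.eventually_ne (y := 0) (by simpa using hP.2.2 _ _ e.2.1)
    refine (hge 2 2).unique ((hasDerivAt_const (0 : ℂ) (1 : ℂ)).congr_of_eventuallyEq ?_)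
    filter_upwards [hne] with t ht
    simp only [Fhat, Matrix.smul_apply, smul_eq_mul]
    exact inv_mul_cancel₀ ht
  · ext a b
    have h0 : HasDerivAt (fun t : ℂ => ∑ h, ∑ k,
        ((P + t • H) e.1.2 h a * Fhat G (P + t • H) e h k * (P + t • H) e.1.1 k b
      + (P + t • H) e.1.2 h b * Fhat G (P + t • H) e h k * (P + t • H) e.1.1 k a)) _ 0 :=
      HasDerivAt.fun_sum fun h _ => HasDerivAt.fun_sum fun k _ =>
        (((hPe e.1.2 h a).fun_mul (hge h k)).fun_mul (hPe e.1.1 k b)).fun_add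
        (((hPe e.1.2 h b).fun_mul (hge h k)).fun_mul (hPe e.1.1 k a))
    simp only [Fhat_entry_zero] at h0
    have h1 := h0.unique (hasDerivAt_const (0 : ℂ) (0 : ℂ))
    simp only [zero_smul, add_zero] at h1
    rw [Matrix.zero_apply, ← h1]
    simp only [JPhat, LinearMap.coe_mk, AddHom.coe_mk, Matrix.add_apply, Matrix.mul_apply,
      Matrix.transpose_apply, Fin.sum_univ_three]
    ring

/-- for a generic configuration `P` in the chart domain `U`, the rank
of the Jacobian `D_P` of the system `Φ_G^aff` with respect to the camera variables
equals the rank of the derivative at `P` of the affine fundamental-matrix map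
`𝓕_G^aff` (restricted to tuples whose `(3,4)` entries vanish). -/
theorem generic_rank_DP_eq_rank_fderiv_Faff {n : ℕ} (hn : 2 ≤ n)
    (G : SimpleGraph (Fin n)) [DecidableRel G.Adj] :
    ∃ h : MvPolynomial (FreeIdx n) ℂ, h ≠ 0 ∧
      ∀ P ∈ chartDomain G,
        MvPolynomial.eval (fun v => P v.1 v.2.1.1 v.2.1.2) h ≠ 0 →
        LinearMap.rank (DP G P) =
          LinearMap.rank
            ((fderiv ℂ (Faff G) P).toLinearMap ∘ₗ (chartDirections n).subtype) := by
  refine ⟨1, one_ne_zero, fun P hP _ => rank_eq_of_ker_eq _ _ ?_⟩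
  ext ⟨H, hH⟩
  simp only [LinearMap.mem_ker, DP, LinearMap.comp_apply, Submodule.subtype_apply,
    ContinuousLinearMap.coe_coe]
  constructor
  · intro h
    funext e
    obtain ⟨h1, h2⟩ := deriv_facts G P hP H e
    rw [h] at h2
    exact ker_aux _ _ (hP.2.1 _) (hP.2.1 _) (hP.2.2 _ _ e.2.1) _ h1 (by simpa using h2)
  · intro h
    funext e
    obtain ⟨h1, h2⟩ := deriv_facts G P hP H e
    rw [h] at h2
    simpa using h2
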